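/- arXiv:2501.00766 — 2 statements merged into one kernel-verified Lean document; each statement's English description precedes it below -/
import Mathlib

section
/- Let Σ be a first-order signature, let 𝒦 be a class of Σ-structures, let Δ denote the set of all basic Horn formulas φ such that every structure in 𝒦 satisfies φ, and let A be a Σ-structure satisfying every formula in Δ. Let 𝒦′ be the class of all Σ(A)-structures B with B|_Σ ∈ 𝒦. Then for every finite set Θ ⊆ diag⁺(A) and every set Ξ ⊆ diag⁻(A) with at most one element, there exists a structure B ∈ 𝒦′ such that B ⊨ Θ ∪ Ξ. -/
/-!
Common definitions: products, reduced products, basic Horn formulas,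
bundled structures, diagrams, units.
-/

namespace ZFHorn

open FirstOrder Language Structure Filter Set

universe u v w u' v' w'

variable {L : FirstOrder.Language.{v, w}}

/-- The direct product structure on a dependent function type. -/
instance piStructure {ι : Type*} (M : ι → Type*) [∀ i, L.Structure (M i)] :
    L.Structure (∀ i, M i) where
  funMap f x i := funMap f fun k => x k i
  RelMap r x := ∀ i, RelMap r fun k => x k i

/-- The reduced-product prestructure on `∀ i, M i` modulo a filter `F`:
functions act coordinatewise, and a relation holds precisely when it holds on a
set of coordinates belonging to `F`. -/
instance reducedProductPrestructure {ι : Type*} (F : Filter ι) (M : ι → Type*)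
    [∀ i, L.Structure (M i)] : L.Prestructure (F.productSetoid M) :=
  { toStructure :=
      { funMap := fun {_} f x i => funMap f fun k => x k i
        RelMap := fun {_} r x => ∀ᶠ i in F, RelMap r fun k => x k i }
    fun_equiv := fun {n} f x y xy => by
      refine mem_of_superset (iInter_mem.2 xy) fun i hi => ?_
      simp only [Set.mem_iInter, Set.mem_setOf_eq] at hi
      simp only [Set.mem_setOf_eq, hi]
    rel_equiv := fun {n} r x y xy => by
      rw [← iff_eq_eq]
      constructor
      · intro hx
        refine mem_of_superset (inter_mem hx (iInter_mem.2 xy)) ?_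
        rintro i ⟨h1, h2⟩
        simp only [Set.mem_iInter, Set.mem_setOf_eq] at *
        rw [← funext h2]
        exact h1
      · intro hy
        refine mem_of_superset (inter_mem hy (iInter_mem.2 xy)) ?_
        rintro i ⟨h1, h2⟩
        simp only [Set.mem_iInter, Set.mem_setOf_eq] at *
        rw [funext h2]
        exact h1 }

/-- The reduced product `∏_F M i` of a family of structures modulo a filter,
as a first-order structure. -/
instance reducedProductStructure {ι : Type*} (F : Filter ι) (M : ι → Type*)
    [∀ i, L.Structure (M i)] : L.Structure (F.Product M) :=
  Language.quotientStructure

instance productNonempty {ι : Type*} (F : Filter ι) (M : ι → Type*)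
    [∀ i, Nonempty (M i)] : Nonempty (F.Product M) :=
  ⟨(↑(fun i => Classical.arbitrary (M i)) : F.Product M)⟩

section Horn

variable {α : Type u'}

/-- `orList φ [ψ₁, …, ψₖ]` is the disjunction `φ ∨ ψ₁ ∨ ⋯ ∨ ψₖ`. -/
def orList : L.Formula α → List (L.Formula α) → L.Formula α
  | φ, [] => φ
  | φ, ψ :: l => φ ⊔ orList ψ l

/-- A list of formulas is a Horn list if each member is atomic or the negation of
an atomic formula, and at most one member is atomic. -/
def IsHornList (l : List (L.Formula α)) : Prop :=
  (∀ χ ∈ l, BoundedFormula.IsAtomic χ ∨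
      ∃ θ : L.Formula α, BoundedFormula.IsAtomic θ ∧ χ = θ.not) ∧
    ∀ i j : Fin l.length,
      BoundedFormula.IsAtomic (l.get i) → BoundedFormula.IsAtomic (l.get j) → i = j

/-- A basic Horn formula is a disjunction `φ₀ ∨ ⋯ ∨ φₙ` in which at most one
disjunct is atomic, the rest being negations of atomic formulas. -/
def IsBasicHorn (φ : L.Formula α) : Prop :=
  ∃ (ψ : L.Formula α) (l : List (L.Formula α)), φ = orList ψ l ∧ IsHornList (ψ :: l)

/-- A strict basic Horn formula (quasi-identity) is a basic Horn formula in which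
at least one disjunct is atomic. -/
def IsQuasiIdentity (φ : L.Formula α) : Prop :=
  ∃ (ψ : L.Formula α) (l : List (L.Formula α)), φ = orList ψ l ∧ IsHornList (ψ :: l) ∧
    ∃ χ ∈ ψ :: l, BoundedFormula.IsAtomic χ

end Horn

/-- `SatAll M φ` means that every assignment of the free variables satisfies `φ` in `M`. -/
def SatAll (M : Type u') [L.Structure M] {α : Type v'} (φ : L.Formula α) : Prop :=
  ∀ v : α → M, φ.Realize v

/-- A unit is a one-element structure in which every relation holds. -/
def IsUnit (L : FirstOrder.Language.{v, w}) (M : Type u') [L.Structure M] : Prop :=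
  (∃ a : M, ∀ b : M, b = a) ∧
    ∀ (n : ℕ) (r : L.Relations n) (x : Fin n → M), RelMap r x

/-- A bundled nonempty `L`-structure. -/
structure SStruct (L : FirstOrder.Language.{v, w}) : Type (max (u + 1) v w) where
  /-- the underlying type -/
  carrier : Type u
  /-- the structure on the underlying type -/
  struc : L.Structure carrier
  /-- the underlying type is nonempty -/
  nonempty : Nonempty carrier

attribute [instance] SStruct.struc SStruct.nonempty

instance : CoeSort (SStruct.{u} L) (Type u) :=
  ⟨SStruct.carrier⟩

/-- Bundle a nonempty structure. -/
def SStruct.of (M : Type u) [i : L.Structure M] [h : Nonempty M] : SStruct.{u} L :=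
  ⟨M, i, h⟩

variable (L)

/-- A class of structures is closed under isomorphisms. -/
def ClosedUnderIso (K : Set (SStruct.{u} L)) : Prop :=
  ∀ M ∈ K, ∀ N : SStruct.{u} L, Nonempty ((M : Type u) ≃[L] (N : Type u)) → N ∈ K

/-- A class of structures is closed under (nonempty) substructures. -/
def ClosedUnderSubstructures (K : Set (SStruct.{u} L)) : Prop :=
  ∀ M ∈ K, ∀ (S : L.Substructure (M : Type u)) (h : Nonempty S),
    (⟨S, inferInstance, h⟩ : SStruct.{u} L) ∈ K

/-- A class of structures is closed under reduced products (modulo proper filters). -/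
def ClosedUnderReducedProducts (K : Set (SStruct.{u} L)) : Prop :=
  ∀ (ι : Type u) (F : Filter ι), F.NeBot → ∀ B : ι → SStruct.{u} L, (∀ i, B i ∈ K) →
    (⟨F.Product fun i => (B i : Type u), inferInstance, inferInstance⟩ : SStruct.{u} L) ∈ K

/-- A class of structures is closed under homomorphic images. -/
def ClosedUnderHomImages (K : Set (SStruct.{u} L)) : Prop :=
  ∀ M ∈ K, ∀ (N : SStruct.{u} L) (f : (M : Type u) →[L] (N : Type u)),
    Function.Surjective f → N ∈ K

/-- A class of structures is closed under direct products. -/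
def ClosedUnderProducts (K : Set (SStruct.{u} L)) : Prop :=
  ∀ (ι : Type u) (B : ι → SStruct.{u} L), (∀ i, B i ∈ K) →
    (⟨∀ i, (B i : Type u), inferInstance, inferInstance⟩ : SStruct.{u} L) ∈ K

/-- A class of structures is axiomatized by a set of formulas `Γ` if it consists
exactly of those structures satisfying every formula of `Γ`. -/
def AxiomatizedBy (K : Set (SStruct.{u} L)) (Γ : Set (L.Formula ℕ)) : Prop :=
  ∀ M : SStruct.{u} L, M ∈ K ↔ ∀ φ ∈ Γ, SatAll (M : Type u) φ

/-- The positive diagram of `A`: all atomic `Σ(A)`-sentences true in `A`. -/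
def DiagPlus (A : Type u') [L.Structure A] : Set ((L[[A]]).Sentence) :=
  {φ | BoundedFormula.IsAtomic φ ∧ A ⊨ φ}

/-- The negative diagram of `A`: all negated atomic `Σ(A)`-sentences true in `A`. -/
def DiagMinus (A : Type u') [L.Structure A] : Set ((L[[A]]).Sentence) :=
  {φ | ∃ ψ : (L[[A]]).Sentence, BoundedFormula.IsAtomic ψ ∧ φ = ψ.not ∧ A ⊨ φ}

/-- The diagram of `A`. -/
def Diag (A : Type u') [L.Structure A] : Set ((L[[A]]).Sentence) :=
  DiagPlus L A ∪ DiagMinus L A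


theorem orList_realize {L : FirstOrder.Language.{v, w}} {α : Type u'} {M : Type w'}
    [L.Structure M] (x : α → M) (l : List (L.Formula α)) :
    ∀ φ : L.Formula α, (orList φ l).Realize x ↔ ∃ χ ∈ φ :: l, Formula.Realize χ x := by
  induction l with
  | nil => intro φ; simp [orList]
  | cons ψ l ih =>
    intro φ
    have : (orList φ (ψ :: l)).Realize x ↔ φ.Realize x ∨ (orList ψ l).Realize x := by
      simp only [orList]
      exact Formula.realize_sup
    rw [this, ih ψ]
    simp

theorem not_isAtomic_not {L : FirstOrder.Language.{v, w}} {α : Type u'}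
    (φ : L.Formula α) : ¬ BoundedFormula.IsAtomic (Formula.not φ) := by
  intro h
  cases h

theorem hornList_cons {L : FirstOrder.Language.{v, w}} {α : Type u'}
    (ψ : L.Formula α) (l : List (L.Formula α))
    (hψ : BoundedFormula.IsAtomic ψ ∨
      ∃ θ : L.Formula α, BoundedFormula.IsAtomic θ ∧ ψ = θ.not)
    (hl : ∀ χ ∈ l, ∃ θ : L.Formula α, BoundedFormula.IsAtomic θ ∧ χ = θ.not) :
    IsHornList (ψ :: l) := by
  have key : ∀ i : Fin (ψ :: l).length,
      BoundedFormula.IsAtomic ((ψ :: l).get i) → i.val = 0 := by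
    rintro ⟨i, hi⟩ h
    cases i with
    | zero => rfl
    | succ i =>
      exfalso
      obtain ⟨θ, -, h2⟩ := hl (l[i]'(by simpa using hi)) (List.getElem_mem _)
      simp only [List.get_eq_getElem, List.getElem_cons_succ] at h
      rw [h2] at h
      exact not_isAtomic_not θ h
  refine ⟨?_, fun i j hi hj => Fin.ext ((key i hi).trans (key j hj).symm)⟩
  intro χ hχ
  rcases List.mem_cons.1 hχ with rfl | h
  · exact hψ
  · exact Or.inr (hl χ h)

theorem realize_congr_free {L : FirstOrder.Language.{v, w}} {α : Type u'} {M : Type w'}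
    [L.Structure M] [DecidableEq α] (φ : L.Formula α) (x y : α → M)
    (h : ∀ a ∈ BoundedFormula.freeVarFinset φ, x a = y a) : φ.Realize x ↔ φ.Realize y := by
  have h1 := BoundedFormula.realize_restrictFreeVar (φ := φ) (f := fun a => (a : α)) (v := x)
    (xs := default) x (fun _ => rfl)
  have h2 := BoundedFormula.realize_restrictFreeVar (φ := φ) (f := fun a => (a : α)) (v := x)
    (xs := default) y (fun a => h a a.2)
  exact h1.symm.trans h2

theorem isAtomic_equivSentence_symm {L : FirstOrder.Language.{v, w}} {α : Type u'}
    (φ : (L[[α]]).Sentence) (h : BoundedFormula.IsAtomic φ) :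
    BoundedFormula.IsAtomic (Formula.equivSentence.symm φ : L.Formula α) := by
  cases h with
  | equal t₁ t₂ => exact BoundedFormula.IsAtomic.equal _ _
  | rel R ts => exact BoundedFormula.IsAtomic.rel _ _

/-- translate a sentence with constants to a formula in variables indexed by `ℕ` -/
noncomputable def trS {L : FirstOrder.Language.{v, w}} {α : Type u'} (f : α → ℕ)
    (φ : (L[[α]]).Sentence) : L.Formula ℕ :=
  Formula.relabel f (Formula.equivSentence.symm φ : L.Formula α)

theorem trS_atomic {L : FirstOrder.Language.{v, w}} {α : Type u'} (f : α → ℕ)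
    (φ : (L[[α]]).Sentence) (h : BoundedFormula.IsAtomic φ) :
    BoundedFormula.IsAtomic (trS f φ) :=
  (isAtomic_equivSentence_symm φ h).relabel _

theorem trS_realize {L : FirstOrder.Language.{v, w}} {α : Type u'} (f : α → ℕ)
    (φ : (L[[α]]).Sentence) {M : Type w'} [L.Structure M] (x : ℕ → M) :
    (trS f φ).Realize x ↔ @Sentence.Realize _ M
      (@Language.withConstantsStructure L M _ α (constantsOn.structure (x ∘ f))) φ := by
  rw [← Formula.realize_equivSentence_symm, trS, Formula.realize_relabel]

/-- The claim in the proof of Lemma 4: if `A` satisfies every basic Horn formula valid in `K`,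
then for every finite `Θ ⊆ diag⁺(A)` and every `Ξ ⊆ diag⁻(A)` with at most one element,
some `Σ(A)`-structure whose `Σ`-reduct lies in `K` satisfies `Θ ∪ Ξ`. -/
theorem finite_diagram_model {L : FirstOrder.Language.{u, u}}
    (K : Set (SStruct.{u} L)) (A : Type u) [L.Structure A] [Nonempty A]
    (hA : ∀ φ : L.Formula ℕ, IsBasicHorn φ →
      (∀ M ∈ K, SatAll (M : Type u) φ) → SatAll A φ)
    (Θ : Set ((L[[A]]).Sentence)) (hΘfin : Θ.Finite) (hΘ : Θ ⊆ DiagPlus L A)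
    (Ξ : Set ((L[[A]]).Sentence)) (hΞ : Ξ ⊆ DiagMinus L A) (hΞone : Ξ.Subsingleton) :
    ∃ B : SStruct.{u} (L[[A]]),
      (haveI : L.Structure (B : Type u) := (L.lhomWithConstants A).reduct (B : Type u);
        (SStruct.of (B : Type u) : SStruct.{u} L) ∈ K) ∧
      ∀ φ ∈ Θ ∪ Ξ, (B : Type u) ⊨ φ := by
  classical
  have hfin : (Θ ∪ Ξ).Finite := hΘfin.union hΞone.finite
  let fv : (L[[A]]).Sentence → Finset A := fun φ =>
    BoundedFormula.freeVarFinset (Formula.equivSentence.symm φ : L.Formula A)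
  let T : Finset A := hfin.toFinset.biUnion fv
  obtain ⟨f, g, hfg⟩ : ∃ (f : A → ℕ) (g : ℕ → A), ∀ a ∈ T, g (f a) = a := by
    obtain ⟨e, he⟩ := Set.countable_iff_exists_injOn.1 T.countable_toSet
    exact ⟨e, Function.invFunOn e T, fun a ha => he.leftInvOn_invFunOn ha⟩
  have hAr : ∀ φ ∈ Θ ∪ Ξ, (trS f φ).Realize g ↔ A ⊨ φ := by
    intro φ hφ
    rw [trS, Formula.realize_relabel, ← Formula.realize_equivSentence_symm_con A φ]
    refine realize_congr_free _ _ _ fun a ha => ?_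
    exact hfg a (Finset.mem_biUnion.2 ⟨φ, hfin.mem_toFinset.2 hφ, ha⟩)
  obtain ⟨ψ, hψ, hψA, hψB⟩ : ∃ ψ : L.Formula ℕ,
      (BoundedFormula.IsAtomic ψ ∨
        ∃ θ : L.Formula ℕ, BoundedFormula.IsAtomic θ ∧ ψ = θ.not) ∧
      ¬ ψ.Realize g ∧
      ∀ (M : Type u) [L.Structure M] (x : ℕ → M), ¬ ψ.Realize x →
        ∀ φ ∈ Ξ, (trS f φ).Realize x := by
    rcases hΞone.eq_empty_or_singleton with h | ⟨ξ, h⟩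
    · let eqf : L.Formula ℕ := Term.bdEqual (Term.var (Sum.inl 0)) (Term.var (Sum.inl 0))
      refine ⟨eqf.not, Or.inr ⟨eqf, BoundedFormula.IsAtomic.equal _ _, rfl⟩, ?_, ?_⟩
      · rw [Formula.realize_not, not_not]
        exact rfl
      · intro M _ x _ φ hφ
        rw [h] at hφ
        exact hφ.elim
    · have hξ : ξ ∈ Ξ := by rw [h]; exact rfl
      obtain ⟨χ, hχ, hχξ, hAξ⟩ := hΞ hξ
      have htr : trS f ξ = (trS f χ).not := by rw [hχξ]; rfl
      refine ⟨trS f χ, Or.inl (trS_atomic f χ hχ), ?_, ?_⟩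
      · have := (hAr ξ (Or.inr hξ)).2 hAξ
        rwa [htr, Formula.realize_not] at this
      · intro M _ x hx φ hφ
        rw [h] at hφ
        rw [Set.mem_singleton_iff.1 hφ, htr, Formula.realize_not]
        exact hx
  let l : List (L.Formula ℕ) := hΘfin.toFinset.toList.map fun θ => (trS f θ).not
  have hmem : ∀ χ, χ ∈ l ↔ ∃ θ ∈ Θ, (trS f θ).not = χ := by
    intro χ
    simp [l]
  have hhorn : IsBasicHorn (orList ψ l) := by
    refine ⟨ψ, l, rfl, hornList_cons ψ l hψ ?_⟩
    intro χ hχ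
    obtain ⟨θ, hθ, rfl⟩ := (hmem χ).1 hχ
    exact ⟨_, trS_atomic f θ (hΘ hθ).1, rfl⟩
  have hnot : ¬ SatAll A (orList ψ l) := by
    intro hs
    obtain ⟨χ, hχ, hr⟩ := (orList_realize g l ψ).1 (hs g)
    rcases List.mem_cons.1 hχ with rfl | hχ
    · exact hψA hr
    · obtain ⟨θ, hθ, rfl⟩ := (hmem χ).1 hχ
      exact (Formula.realize_not.1 hr) ((hAr θ (Or.inl hθ)).2 (hΘ hθ).2)
  have hex : ∃ M ∈ K, ∃ x : ℕ → (M : Type u), ¬ (orList ψ l).Realize x := by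
    by_contra hcon
    refine hnot (hA _ hhorn fun M hM x => ?_)
    by_contra hx
    exact hcon ⟨M, hM, x, hx⟩
  obtain ⟨M, hM, x, hx⟩ := hex
  rw [orList_realize] at hx
  refine ⟨⟨M, @Language.withConstantsStructure L M _ A (constantsOn.structure (x ∘ f)),
    M.nonempty⟩, hM, ?_⟩
  intro φ hφ
  refine (trS_realize f φ x).1 ?_
  rcases hφ with hφ | hφ
  · by_contra hc
    exact hx ⟨(trS f φ).not, List.mem_cons_of_mem _ ((hmem _).2 ⟨φ, hφ, rfl⟩),
      Formula.realize_not.2 hc⟩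
  · exact hψB M x (fun hr => hx ⟨ψ, List.mem_cons_self, hr⟩) φ hφ

end ZFHorn
end

section
/- Let Σ be a first-order signature. If a class 𝒦 of Σ-structures is axiomatized by a set of basic Horn formulas, then 𝒦 is closed under isomorphisms, substructures, and reduced products. -/
/-!
Common definitions: products, reduced products, basic Horn formulas,
bundled structures, diagrams, units.
-/

namespace ZFHorn

open FirstOrder Language Structure Filter Set

universe u v w u' v' w'

variable {L : FirstOrder.Language.{v, w}}

variable (L)

theorem realize_orList {L : FirstOrder.Language.{v, w}} {α : Type u'} {M : Type v'}
    [L.Structure M] (x : α → M) (l : List (L.Formula α)) :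
    ∀ ψ : L.Formula α, (orList ψ l).Realize x ↔ ∃ χ ∈ ψ :: l, χ.Realize x := by
  induction l with
  | nil => intro ψ; simp [orList]
  | cons a l ih =>
    intro ψ
    rw [orList, Formula.realize_sup, ih]
    simp

theorem isQF_orList {L : FirstOrder.Language.{v, w}} {α : Type u'} (l : List (L.Formula α)) :
    ∀ ψ : L.Formula α, (∀ χ ∈ ψ :: l, BoundedFormula.IsQF χ) →
      BoundedFormula.IsQF (orList ψ l) := by
  induction l with
  | nil => intro ψ h; exact h ψ (by simp)
  | cons a l ih =>
    intro ψ h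
    exact (h ψ (by simp)).sup (ih a fun χ hχ => h χ (List.mem_cons_of_mem _ hχ))

theorem IsBasicHorn.isQF {L : FirstOrder.Language.{v, w}} {α : Type u'} {φ : L.Formula α}
    (h : IsBasicHorn φ) : BoundedFormula.IsQF φ := by
  obtain ⟨ψ, l, rfl, h, -⟩ := h
  refine isQF_orList l ψ fun χ hχ => ?_
  rcases h χ hχ with h | ⟨θ, h, rfl⟩
  · exact h.isQF
  · exact h.isQF.not

theorem satAll_of_embedding {L : FirstOrder.Language.{v, w}} {M : Type u'} {N : Type v'}
    [L.Structure M] [L.Structure N] (f : M ↪[L] N) {α : Type w'} {φ : L.Formula α}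
    (hφ : BoundedFormula.IsQF φ) (h : SatAll N φ) : SatAll M φ := by
  intro x
  refine (hφ.realize_embedding f (v := x) (xs := default)).1 ?_
  have := h (f ∘ x)
  rw [Formula.Realize] at this
  rwa [Subsingleton.elim (f ∘ default) default]

/-- Class of a tuple in the reduced product. -/
def mkP {ι : Type u} (F : Filter ι) (M : ι → Type u') (x : ∀ i, M i) : F.Product M :=
  Quotient.mk (F.productSetoid M) x

theorem term_realize_prod {L : FirstOrder.Language.{v, w}} {ι : Type u} (F : Filter ι)
    (M : ι → Type u') [∀ i, L.Structure (M i)] {β : Type v'} (x : β → ∀ i, M i)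
    (t : L.Term β) :
    (t.realize fun b => mkP F M (x b)) =
      mkP F M (fun i => t.realize fun b => x b i) := by
  induction t with
  | var => rfl
  | func f ts ih =>
    simp only [Term.realize, ih]
    exact funMap_quotient_mk' (s := F.productSetoid M) f _

theorem atomic_realize_prod {L : FirstOrder.Language.{v, w}} {ι : Type u} (F : Filter ι)
    (M : ι → Type u') [∀ i, L.Structure (M i)] {β : Type v'} (x : β → ∀ i, M i)
    (φ : L.Formula β) (h : BoundedFormula.IsAtomic φ) :
    (φ.Realize fun b => mkP F M (x b)) ↔
      ∀ᶠ i in F, φ.Realize fun b => x b i := by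
  have e1 : (Sum.elim (fun b => mkP F M (x b))
      (default : Fin 0 → F.Product M)) = fun b => mkP F M
        (Sum.elim x (fun k : Fin 0 => k.elim0) b) := by
    funext b
    rcases b with b | b
    · rfl
    · exact b.elim0
  have e2 : ∀ i, (Sum.elim (fun b => x b i) (default : Fin 0 → M i)) =
      fun b => Sum.elim x (fun k : Fin 0 => k.elim0) b i := by
    intro i
    funext b
    rcases b with b | b
    · rfl
    · exact b.elim0
  cases h with
  | equal t₁ t₂ =>
    simp only [Formula.Realize, BoundedFormula.realize_bdEqual, e1, e2, term_realize_prod]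
    exact Quotient.eq''
  | rel R ts =>
    simp only [Formula.Realize, BoundedFormula.realize_rel, e1, e2, term_realize_prod]
    exact relMap_quotient_mk' (s := F.productSetoid M) R _

theorem satAll_prod {L : FirstOrder.Language.{v, w}} {ι : Type u} (F : Filter ι) [F.NeBot]
    (M : ι → Type u') [∀ i, L.Structure (M i)] {β : Type v'} {φ : L.Formula β}
    (hφ : IsBasicHorn φ) (h : ∀ i, SatAll (M i) φ) : SatAll (F.Product M) φ := by
  intro y
  obtain ⟨x, rfl⟩ : ∃ x : β → ∀ i, M i,
      y = fun b => mkP F M (x b) :=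
    ⟨fun b => Quotient.out (y b), funext fun b => (Quotient.out_eq (y b)).symm⟩
  obtain ⟨ψ, l, rfl, h1, h2⟩ := hφ
  rw [realize_orList]
  simp only [SatAll, realize_orList] at h
  generalize ψ :: l = l at *
  by_contra hc
  push Not at hc
  have key : ∀ χ ∈ l, ¬ BoundedFormula.IsAtomic χ →
      ∀ᶠ i in F, ¬ χ.Realize fun b => x b i := by
    intro χ hχ hn
    rcases h1 χ hχ with ha | ⟨θ, hθ, rfl⟩
    · exact absurd ha hn
    · have := hc _ hχ
      rw [Formula.realize_not, not_not, atomic_realize_prod F M x θ hθ] at this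
      filter_upwards [this] with i hi
      simpa [Formula.realize_not] using hi
  have key2 : ∀ᶠ i in F, ∀ k : Fin l.length, ¬ BoundedFormula.IsAtomic (l.get k) →
      ¬ (l.get k).Realize fun b => x b i := by
    rw [eventually_all]
    intro k
    by_cases ha : BoundedFormula.IsAtomic (l.get k)
    · exact Eventually.of_forall fun i hn => absurd ha hn
    · filter_upwards [key _ (List.get_mem l k) ha] with i hi _ using hi
  by_cases hex : ∃ k : Fin l.length, BoundedFormula.IsAtomic (l.get k)
  · obtain ⟨k, hk⟩ := hex
    apply hc _ (List.get_mem l k)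
    rw [atomic_realize_prod F M x _ hk]
    filter_upwards [key2] with i hi
    obtain ⟨χ, hχ, hr⟩ := h i fun b => x b i
    obtain ⟨j, rfl⟩ := List.get_of_mem hχ
    by_cases ha : BoundedFormula.IsAtomic (l.get j)
    · rw [h2 k j hk ha]; exact hr
    · exact absurd hr (hi j ha)
  · obtain ⟨i, hi⟩ := key2.exists
    obtain ⟨χ, hχ, hr⟩ := h i fun b => x b i
    obtain ⟨j, rfl⟩ := List.get_of_mem hχ
    exact hi j (fun ha => hex ⟨j, ha⟩) hr

/-- The easy direction of Theorem 5: a class axiomatized by basic Horn formulas is closed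
under isomorphisms, substructures, and reduced products. -/
theorem closed_of_basicHorn_axiomatized {L : FirstOrder.Language.{u, u}}
    (K : Set (SStruct.{u} L)) (Γ : Set (L.Formula ℕ))
    (hΓ : ∀ φ ∈ Γ, IsBasicHorn φ) (hK : AxiomatizedBy L K Γ) :
    ClosedUnderIso L K ∧ ClosedUnderSubstructures L K ∧
      ClosedUnderReducedProducts L K := by
  refine ⟨?_, ?_, ?_⟩
  · rintro M hM N ⟨e⟩
    rw [hK] at hM ⊢
    exact fun φ hφ => satAll_of_embedding e.symm.toEmbedding (hΓ φ hφ).isQF (hM φ hφ)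
  · intro M hM S hS
    rw [hK] at hM ⊢
    exact fun φ hφ => satAll_of_embedding S.subtype (hΓ φ hφ).isQF (hM φ hφ)
  · intro ι F hF B hB
    rw [hK]
    exact fun φ hφ => satAll_prod F (fun i => (B i : Type u)) (hΓ φ hφ)
      fun i => (hK (B i)).1 (hB i) φ hφ

end ZFHorn
end
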